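/- arXiv:1807.08423 — 2 statements merged into one kernel-verified Lean document; each statement's English description precedes it below -/
import Mathlib

section
/- Let 0 < 1/n ≪ ε ≤ d ≤ 1 (that is, for all ε, d with 0 < ε ≤ d ≤ 1 there exists n₀ such that the following holds for all n ≥ n₀). Suppose G is an (ε, d)-super-regular bipartite graph with vertex partition (A, B) satisfying |A|, |B| ≤ n. Let a₁, a₂, b₁, b₂ ∈ ℕ be numbers such that a₁, a₂, b₁, b₂ ≥ εn, a₁ + a₂ = |A|, and b₁ + b₂ = |B|. Then there exist a partition A₁, A₂ of A and a partition B₁, B₂ of B such that for all i, j ∈ [2]: |A_i| = a_i, |B_j| = b_j, and the induced bipartite graph G[A_i, B_j] is (ε^{1/2}, d)-super-regular. -/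
/-!
A set `S` of prescribed size drawn from `A` has, with positive probability, nearly the same density
as `A` inside each of `O(n)` given sets; this is derandomised by keeping a sum of exponential
moments small while the elements of `A` are decided one by one. Applied to neighbourhoods, it
preserves the degrees. For regularity, decompose the adjacency function on `A × B` into boundedly
many rectangles `P i × Q i` up to a small error in the cut norm (Frieze and Kannan), and sample also
with respect to the atoms generated by the `P i`, respectively the `Q i`. A subset of a sample then
lifts to a subset of the whole side that takes up the same proportion of each atom, so an irregular
pair of subsets of the samples would lift to an irregular pair in `(A, B)`.
-/

open SimpleGraph

namespace ApproxDecomp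

/-- The number of (ordered) edges of `G` from `A` to `B`; for disjoint `A`, `B`
this is the number of edges with one endpoint in each. -/
noncomputable def eBetween {V : Type*} (G : SimpleGraph V) (A B : Set V) : ℕ :=
  {p : V × V | p.1 ∈ A ∧ p.2 ∈ B ∧ G.Adj p.1 p.2}.ncard

/-- The number of neighbours of `v` inside `B`. -/
noncomputable def degIn {V : Type*} (G : SimpleGraph V) (v : V) (B : Finset V) : ℕ :=
  ((B : Set V) ∩ G.neighborSet v).ncard

/-- The pair `(A,B)` is `(ε,d)`-regular in `G`. -/
def IsRegularPair {V : Type*} (G : SimpleGraph V) (A B : Finset V) (ε d : ℝ) : Prop :=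
  ∀ A' ⊆ A, ∀ B' ⊆ B, ε * A.card ≤ (A'.card : ℝ) → ε * B.card ≤ (B'.card : ℝ) →
    |(eBetween G ↑A' ↑B' : ℝ) / (A'.card * B'.card) - d| < ε

/-- The pair `(A,B)` is `(ε,d)`-super-regular in `G`. -/
def IsSuperRegularPair {V : Type*} (G : SimpleGraph V) (A B : Finset V) (ε d : ℝ) : Prop :=
  IsRegularPair G A B ε d ∧
  (∀ a ∈ A, (d - ε) * B.card ≤ (degIn G a B : ℝ) ∧ (degIn G a B : ℝ) ≤ (d + ε) * B.card) ∧
  (∀ b ∈ B, (d - ε) * A.card ≤ (degIn G b A : ℝ) ∧ (degIn G b A : ℝ) ≤ (d + ε) * A.card)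

/-- `G` is a bipartite graph with vertex partition `(A, B)`. -/
def IsBipartiteWith {V : Type*} (G : SimpleGraph V) (A B : Finset V) : Prop :=
  Disjoint A B ∧ (∀ v : V, v ∈ A ∨ v ∈ B) ∧
  (∀ u v : V, G.Adj u v → (u ∈ A ∧ v ∈ B) ∨ (u ∈ B ∧ v ∈ A))

universe u v

section Development

open Finset Filter
open scoped Finset

section Sampling

variable {α ι : Type*}

lemma two_point_mgf_le {p t : ℝ} (hp0 : 0 ≤ p) (hp1 : p ≤ 1) (ht : |t| ≤ 1) :
    p * Real.exp (t * (1 - p)) + (1 - p) * Real.exp (-(t * p)) ≤ Real.exp (t ^ 2) := by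
  have exp_le_quadratic (u : ℝ) (hu : |u| ≤ 1) : Real.exp u ≤ 1 + u + u ^ 2 := by
    linarith [(abs_le.mp (Real.abs_exp_sub_one_sub_id_le hu)).2]
  have hq : 0 ≤ 1 - p := sub_nonneg.mpr hp1
  have habs (s : ℝ) (hs0 : 0 ≤ s) (hs1 : s ≤ 1) : |t * s| ≤ 1 := by
    rw [abs_mul, abs_of_nonneg hs0]
    exact mul_le_one₀ ht hs0 hs1
  calc
    p * Real.exp (t * (1 - p)) + (1 - p) * Real.exp (-(t * p))
      ≤ p * (1 + t * (1 - p) + (t * (1 - p)) ^ 2)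
          + (1 - p) * (1 + -(t * p) + (-(t * p)) ^ 2) := by
        gcongr
        · exact exp_le_quadratic _ (habs _ hq (by linarith))
        · exact exp_le_quadratic _ (by simpa only [abs_neg] using habs p hp0 hp1)
    _ = p * (1 - p) * t ^ 2 + 1 := by ring
    _ ≤ t ^ 2 + 1 := by
        gcongr
        exact mul_le_of_le_one_left (sq_nonneg t) (mul_le_one₀ hp1 hq (by linarith))
    _ ≤ Real.exp (t ^ 2) := Real.add_one_le_exp _

-- The method of conditional expectations for a `p`-random subset of `A`: deciding one element at
-- a time, one of the two choices does not exceed their `p`-weighted mean.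
lemma exists_subset_sum_exp_le [Fintype ι] (w : ι → α → ℝ) {p l : ℝ} (hp0 : 0 ≤ p) (hp1 : p ≤ 1)
    (hl : l ≤ 1) (A : Finset α) (hw : ∀ i, ∀ x ∈ A, |w i x| ≤ l) :
    ∃ S ⊆ A, ∑ i, Real.exp (∑ x ∈ S, w i x - p * ∑ x ∈ A, w i x)
      ≤ Fintype.card ι * Real.exp (l ^ 2 * #A) := by
  classical
  induction A using Finset.induction_on with
  | empty => exact ⟨∅, Subset.rfl, by simp⟩
  | insert a A ha ih =>
    obtain ⟨S, hSA, hS⟩ := ih fun i x hx ↦ hw i x (mem_insert_of_mem hx)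
    let potential (T : Finset α) : ℝ :=
      ∑ i, Real.exp (∑ x ∈ T, w i x - p * ∑ x ∈ insert a A, w i x)
    have hmean : p * potential (insert a S) + (1 - p) * potential S
        ≤ Fintype.card ι * Real.exp (l ^ 2 * #(insert a A)) := by
      calc
        p * potential (insert a S) + (1 - p) * potential S
          = ∑ i, Real.exp (∑ x ∈ S, w i x - p * ∑ x ∈ A, w i x) *
              (p * Real.exp (w i a * (1 - p)) + (1 - p) * Real.exp (-(w i a * p))) := by
            simp only [potential, mul_sum, ← sum_add_distrib, sum_insert ha,
              sum_insert (mt (@hSA a) ha), mul_add, mul_left_comm (Real.exp _), ← Real.exp_add]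
            refine sum_congr rfl fun i _ ↦ ?_
            congr 3 <;> ring
        _ ≤ ∑ i, Real.exp (∑ x ∈ S, w i x - p * ∑ x ∈ A, w i x) * Real.exp (l ^ 2) := by
            gcongr with i
            have hwi := hw i a (mem_insert_self a A)
            refine (two_point_mgf_le hp0 hp1 (hwi.trans hl)).trans (Real.exp_le_exp.mpr ?_)
            exact sq_le_sq' (abs_le.mp hwi).1 (abs_le.mp hwi).2
        _ ≤ Fintype.card ι * Real.exp (l ^ 2 * #A) * Real.exp (l ^ 2) := by
            rw [← sum_mul]
            gcongr
        _ = Fintype.card ι * Real.exp (l ^ 2 * #(insert a A)) := by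
            rw [card_insert_of_notMem ha, mul_assoc, ← Real.exp_add]
            push_cast
            ring_nf
    have hmin := (Convex.min_le_combo (potential (insert a S)) (potential S) hp0
      (sub_nonneg.mpr hp1) (add_sub_cancel p 1)).trans hmean
    rcases min_le_iff.mp hmin with h | h
    · exact ⟨insert a S, insert_subset_insert a hSA, h⟩
    · exact ⟨S, hSA.trans (subset_insert a A), h⟩

lemma exists_subset_abs_sum_sub_le [Fintype ι] (w : ι → α → ℝ) {p l : ℝ} (hp0 : 0 ≤ p)
    (hp1 : p ≤ 1) (hl : l ≤ 1) (A : Finset α) (hw : ∀ i, ∀ x ∈ A, |w i x| ≤ l) :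
    ∃ S ⊆ A, ∀ i, |∑ x ∈ S, w i x - p * ∑ x ∈ A, w i x|
      ≤ Real.log (2 * Fintype.card ι) + l ^ 2 * #A := by
  obtain ⟨S, hSA, hS⟩ := exists_subset_sum_exp_le (Sum.elim w (-w)) hp0 hp1 hl A <| by
    rintro (i | i) x hx
    · exact hw i x hx
    · simpa using hw i x hx
  refine ⟨S, hSA, fun i ↦ ?_⟩
  have : Nonempty ι := ⟨i⟩
  have hexponent (j : ι ⊕ ι) : ∑ x ∈ S, Sum.elim w (-w) j x - p * ∑ x ∈ A, Sum.elim w (-w) j x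
      ≤ Real.log (2 * Fintype.card ι) + l ^ 2 * #A := by
    rw [← Real.exp_le_exp, Real.exp_add, Real.exp_log (by positivity)]
    refine (single_le_sum (f := fun j ↦ Real.exp (∑ x ∈ S, Sum.elim w (-w) j x -
      p * ∑ x ∈ A, Sum.elim w (-w) j x)) (fun _ _ ↦ (Real.exp_pos _).le)
      (mem_univ j)).trans (hS.trans_eq ?_)
    simp [two_mul]
  have hpos := hexponent (.inl i)
  have hneg := hexponent (.inr i)
  simp only [Sum.elim_inl, Sum.elim_inr, Pi.neg_apply, sum_neg_distrib] at hpos hneg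
  exact abs_le.mpr ⟨by linarith, hpos⟩

lemma abs_sum_sub_sum_le_of_subset {S T : Finset α} (hST : S ⊆ T) {w : α → ℝ}
    (hw : ∀ x ∈ T, |w x| ≤ 1) : |∑ x ∈ T, w x - ∑ x ∈ S, w x| ≤ (#T : ℝ) - #S := by
  classical
  rw [← sum_sdiff_eq_sub hST, ← Nat.cast_sub (card_le_card hST), ← card_sdiff_of_subset hST]
  calc
    |∑ x ∈ T \ S, w x| ≤ ∑ x ∈ T \ S, |w x| := abs_sum_le_sum_abs _ _
    _ ≤ ∑ _x ∈ T \ S, 1 := sum_le_sum fun x hx ↦ hw x (sdiff_subset hx)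
    _ = #(T \ S) := by simp

lemma exists_subset_card_eq_abs_sum_sub_le {A S : Finset α} (hSA : S ⊆ A) {a : ℕ} (ha : a ≤ #A) :
    ∃ T ⊆ A, #T = a ∧ ∀ w : α → ℝ, (∀ x ∈ A, |w x| ≤ 1) →
      |∑ x ∈ T, w x - ∑ x ∈ S, w x| ≤ |(a : ℝ) - #S| := by
  rcases le_total a #S with h | h
  · obtain ⟨T, hTS, rfl⟩ := exists_subset_card_eq h
    refine ⟨T, hTS.trans hSA, rfl, fun w hw ↦ ?_⟩
    rw [abs_sub_comm, abs_sub_comm (#T : ℝ)]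
    exact (abs_sum_sub_sum_le_of_subset hTS fun x hx ↦ hw x (hSA hx)).trans (le_abs_self _)
  · obtain ⟨T, hST, hTA, rfl⟩ := exists_subsuperset_card_eq hSA h ha
    exact ⟨T, hTA, rfl, fun w hw ↦
      (abs_sum_sub_sum_le_of_subset hST fun x hx ↦ hw x (hTA hx)).trans (le_abs_self _)⟩

-- Adjoining the constant weight `1` to the family controls the size of the random subset, which
-- can therefore be corrected to `a` at the cost of doubling the error.
lemma exists_subset_card_eq_discrepancy_le [Fintype ι] (w : ι → α → ℝ) {l : ℝ} (hl0 : 0 < l)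
    (hl1 : l ≤ 1) {A : Finset α} (hA : A.Nonempty) (hw : ∀ i, ∀ x ∈ A, |w i x| ≤ 1) {a : ℕ}
    (ha : a ≤ #A) :
    ∃ S ⊆ A, #S = a ∧ ∀ i, |∑ x ∈ S, w i x - a / #A * ∑ x ∈ A, w i x|
      ≤ 2 * (Real.log (2 * (Fintype.card ι + 1)) / l + l * #A) := by
  have hcard : (0 : ℝ) < #A := by exact_mod_cast hA.card_pos
  let w' : Option ι → α → ℝ := fun o ↦ o.elim 1 w
  have hw' : ∀ o, ∀ x ∈ A, |w' o x| ≤ 1 := by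
    rintro (_ | i) x hx
    · simp [w']
    · exact hw i x hx
  obtain ⟨R, hRA, hR⟩ := exists_subset_abs_sum_sub_le (fun o x ↦ l * w' o x) (p := a / #A)
    (by positivity) ((div_le_one hcard).mpr (by exact_mod_cast ha)) hl1 A fun o x hx ↦ by
      rw [abs_mul, abs_of_pos hl0]
      exact mul_le_of_le_one_right hl0.le (hw' o x hx)
  have hR' (o : Option ι) : |∑ x ∈ R, w' o x - a / #A * ∑ x ∈ A, w' o x|
      ≤ Real.log (2 * (Fintype.card ι + 1)) / l + l * #A := by
    have h := hR o
    rw [← mul_sum, ← mul_sum, mul_left_comm, ← mul_sub, abs_mul, abs_of_pos hl0,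
      Fintype.card_option] at h
    push_cast at h
    rw [← mul_le_mul_iff_right₀ hl0]
    refine h.trans_eq ?_
    field_simp
  obtain ⟨S, hSA, hSa, hS⟩ := exists_subset_card_eq_abs_sum_sub_le hRA ha
  refine ⟨S, hSA, hSa, fun i ↦ ?_⟩
  have hsize := hR' none
  simp only [w', Option.elim_none, Pi.one_apply, sum_const, nsmul_eq_mul, mul_one,
    div_mul_cancel₀ _ hcard.ne', abs_sub_comm (#R : ℝ)] at hsize
  calc
    |∑ x ∈ S, w i x - a / #A * ∑ x ∈ A, w i x|
      ≤ |∑ x ∈ S, w i x - ∑ x ∈ R, w i x| + |∑ x ∈ R, w i x - a / #A * ∑ x ∈ A, w i x| :=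
        abs_sub_le _ _ _
    _ ≤ 2 * (Real.log (2 * (Fintype.card ι + 1)) / l + l * #A) := by
        have hi : |∑ x ∈ R, w i x - a / #A * ∑ x ∈ A, w i x|
            ≤ Real.log (2 * (Fintype.card ι + 1)) / l + l * #A := hR' (some i)
        linarith [hS (w i) (hw i)]

end Sampling

section Samples

variable {α ι κ : Type*}

/-- The density `|S ∩ X| / |S|` of a set `X` inside a finite set `S`, with value `0` when `S` is
empty. -/
noncomputable def relDensity (S : Finset α) (X : Set α) : ℝ := ((S : Set α) ∩ X).ncard / #S

lemma sum_indicator_one (S : Finset α) (X : Set α) :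
    ∑ x ∈ S, X.indicator (1 : α → ℝ) x = ((S : Set α) ∩ X).ncard := by
  classical
  have hcoe : (S : Set α) ∩ X = ({x ∈ S | x ∈ X} : Finset α) := by ext; simp
  rw [hcoe, Set.ncard_coe_finset]
  simp [Set.indicator_apply]

lemma relDensity_eq_sum_div (S : Finset α) (X : Set α) :
    relDensity S X = (∑ x ∈ S, X.indicator (1 : α → ℝ) x) / #S := by
  rw [relDensity, sum_indicator_one]

/-- `S` is a representative sample of `A` for the family `X`: it contains at least a proportion `c`
of `A` and at least `1 / η` elements, and every `X i` has the same density in `S` as in `A` up to an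
error `η`. -/
structure IsSample (c η : ℝ) (X : ι → Set α) (A S : Finset α) : Prop where
  subset : S ⊆ A
  mul_card_le : c * #A ≤ #S
  one_le_mul_card : 1 ≤ η * #S
  abs_relDensity_sub_le (i : ι) : |relDensity S (X i) - relDensity A (X i)| ≤ η

namespace IsSample

variable {c η : ℝ} {X : ι → Set α} {A S : Finset α}

lemma nonempty (h : IsSample c η X A S) : S.Nonempty := by
  by_contra hS
  have := h.one_le_mul_card
  norm_num [not_nonempty_iff_eq_empty.mp hS] at this

lemma card_pos (h : IsSample c η X A S) : (0 : ℝ) < #S := by exact_mod_cast h.nonempty.card_pos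

lemma card_superset_pos (h : IsSample c η X A S) : (0 : ℝ) < #A := by
  exact_mod_cast (h.nonempty.mono h.subset).card_pos

lemma card_div_card_le (h : IsSample c η X A S) (hc : 0 < c) : (#A : ℝ) / #S ≤ 1 / c := by
  rw [div_le_div_iff₀ h.card_pos hc, one_mul, mul_comm]
  exact h.mul_card_le

lemma comp (h : IsSample c η X A S) (e : κ → ι) : IsSample c η (X ∘ e) A S :=
  ⟨h.subset, h.mul_card_le, h.one_le_mul_card, fun k ↦ h.abs_relDensity_sub_le (e k)⟩

lemma of_discrepancy (hSA : S ⊆ A) (hcard : c * #A ≤ #S) (hlarge : 1 ≤ η * #S)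
    (hdisc : ∀ i, |∑ x ∈ S, (X i).indicator (1 : α → ℝ) x
      - #S / #A * ∑ x ∈ A, (X i).indicator (1 : α → ℝ) x| ≤ η * #S) : IsSample c η X A S := by
  refine ⟨hSA, hcard, hlarge, fun i ↦ ?_⟩
  have hS : (0 : ℝ) < #S := by
    refine (Nat.cast_nonneg _).lt_of_ne fun h ↦ ?_
    norm_num [← h] at hlarge
  have hscale : relDensity S (X i) - relDensity A (X i)
      = (∑ x ∈ S, (X i).indicator (1 : α → ℝ) x
          - #S / #A * ∑ x ∈ A, (X i).indicator (1 : α → ℝ) x) / #S := by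
    rw [relDensity_eq_sum_div, relDensity_eq_sum_div]
    field_simp
  rw [hscale, abs_div, abs_of_pos hS, div_le_iff₀ hS]
  exact hdisc i

end IsSample

lemma abs_discrepancy_sdiff [DecidableEq α] {A S : Finset α} (hA : A.Nonempty) (hSA : S ⊆ A)
    (w : α → ℝ) : |∑ x ∈ A \ S, w x - #(A \ S) / #A * ∑ x ∈ A, w x|
      = |∑ x ∈ S, w x - #S / #A * ∑ x ∈ A, w x| := by
  have hcard : (#A : ℝ) ≠ 0 := by exact_mod_cast hA.card_ne_zero
  rw [sum_sdiff_eq_sub hSA, card_sdiff_of_subset hSA, Nat.cast_sub (card_le_card hSA), sub_div,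
    div_self hcard, ← abs_neg]
  congr 1
  ring

lemma isLittleO_log_two_mul_add_natCast (M : ℝ) :
    (fun n : ℕ ↦ Real.log (2 * (n + M))) =o[atTop] (fun n : ℕ ↦ (n : ℝ)) := by
  have htendsto : Tendsto (fun n : ℕ ↦ 2 * ((n : ℝ) + M)) atTop atTop :=
    (tendsto_atTop_add_const_right _ _ tendsto_natCast_atTop_atTop).const_mul_atTop two_pos
  refine (Real.isLittleO_log_id_atTop.comp_tendsto htendsto).trans_isBigO ?_
  exact ((Asymptotics.isBigO_refl _ _).add
    (Asymptotics.isLittleO_const_left.mpr (Or.inr <| tendsto_norm_atTop_atTop.comp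
      tendsto_natCast_atTop_atTop)).isBigO).const_mul_left 2

lemma exists_eventually_discrepancy_bound_le {e : ℝ} (he : 0 < e) (M : ℕ) :
    ∃ l : ℝ, 0 < l ∧ l ≤ 1 ∧ ∀ᶠ n : ℕ in atTop, ∀ {k N : ℕ}, k ≤ n + M → N ≤ n →
      2 * (Real.log (2 * (k + 1)) / l + l * N) ≤ e * n := by
  obtain ⟨l, hl0, hl1, hle⟩ : ∃ l : ℝ, 0 < l ∧ l ≤ 1 ∧ l ≤ e / 4 :=
    ⟨min 1 (e / 4), by positivity, min_le_left _ _, min_le_right _ _⟩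
  have hlog := (isLittleO_log_two_mul_add_natCast (M + 1)).bound
    (show 0 < l * (e / 4) by positivity)
  refine ⟨l, hl0, hl1, ?_⟩
  filter_upwards [hlog] with n hlog k N hk hN
  have hk' : (k : ℝ) ≤ n + M := by exact_mod_cast hk
  have hlogk : Real.log (2 * (k + 1)) ≤ l * (e / 4) * n := by
    rw [Real.norm_natCast] at hlog
    exact (Real.log_le_log (by positivity) (by linarith)).trans ((Real.le_norm_self _).trans hlog)
  calc
    2 * (Real.log (2 * (k + 1)) / l + l * N) ≤ 2 * (l * (e / 4) * n / l + e / 4 * n) := by gcongr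
    _ = e * n := by field_simp; ring

lemma exists_isSample_partition {c η : ℝ} (hc : 0 < c) (hη : 0 < η) (M : ℕ) :
    ∀ᶠ n : ℕ in atTop, ∀ {α : Type u} {ι : Type v} [DecidableEq α] [Fintype ι] (X : ι → Set α)
      {A : Finset α}, #A ≤ n → Fintype.card ι ≤ n + M →
      ∀ {a₁ a₂ : ℕ}, c * n ≤ a₁ → c * n ≤ a₂ → a₁ + a₂ = #A →
      ∃ A₁ A₂ : Finset α, Disjoint A₁ A₂ ∧ A₁ ∪ A₂ = A ∧ #A₁ = a₁ ∧ #A₂ = a₂ ∧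
        IsSample c η X A A₁ ∧ IsSample c η X A A₂ := by
  obtain ⟨l, hl0, hl1, hl⟩ := exists_eventually_discrepancy_bound_le (mul_pos hη hc) M
  have hlarge : ∀ᶠ n : ℕ in atTop, 1 / (η * c) ≤ n :=
    tendsto_natCast_atTop_atTop.eventually_ge_atTop _
  filter_upwards [hl, hlarge] with n hl hlarge α ι _ _ X A hAn hι a₁ a₂ ha₁ ha₂ ha
  rw [div_le_iff₀' (by positivity)] at hlarge
  have scale_le {a : ℕ} (h : c * n ≤ a) : η * c * n ≤ η * a := by
    rw [mul_assoc]
    gcongr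
  have hA : A.Nonempty := by
    by_contra! h
    have ha₁' : a₁ = 0 := by simp_all
    have := hlarge.trans (scale_le ha₁)
    norm_num [ha₁'] at this
  obtain ⟨S, hSA, rfl, hS⟩ := exists_subset_card_eq_discrepancy_le
    (fun i ↦ (X i).indicator (1 : α → ℝ)) hl0 hl1 hA
    (fun i x _ ↦ by by_cases hx : x ∈ X i <;> simp [hx]) (ha ▸ Nat.le_add_right a₁ a₂)
  have hSc : #(A \ S) = a₂ := by rw [card_sdiff_of_subset hSA]; omega
  have hcA : c * #A ≤ c * n := by gcongr
  refine ⟨S, A \ S, disjoint_sdiff, union_sdiff_of_subset hSA, rfl, hSc,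
    .of_discrepancy hSA (hcA.trans ha₁) (hlarge.trans (scale_le ha₁)) fun i ↦
      (hS i).trans ((hl hι hAn).trans (scale_le ha₁)),
    .of_discrepancy sdiff_subset (hSc ▸ hcA.trans ha₂) (hSc ▸ hlarge.trans (scale_le ha₂))
      fun i ↦ ?_⟩
  rw [abs_discrepancy_sdiff hA hSA, hSc]
  exact (hS i).trans ((hl hι hAn).trans (scale_le ha₂))

end Samples

section CutDecomposition

variable {α β γ : Type*}

lemma sum_sub_ite_sq [DecidableEq γ] {E R : Finset γ} (hR : R ⊆ E) (f : γ → ℝ) (t : ℝ) :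
    ∑ x ∈ E, (f x - if x ∈ R then t else 0) ^ 2
      = ∑ x ∈ E, f x ^ 2 - 2 * t * ∑ x ∈ R, f x + t ^ 2 * #R := by
  have hsq (x : γ) : (f x - if x ∈ R then t else 0) ^ 2
      = f x ^ 2 + if x ∈ R then t ^ 2 - 2 * t * f x else 0 := by
    split_ifs <;> ring
  simp only [hsq, sum_add_distrib, sum_ite_mem, inter_eq_right.mpr hR, sum_sub_distrib, sum_const,
    nsmul_eq_mul, ← mul_sum]
  ring

-- As long as some `R` violates the conclusion, subtracting `± δ` on `R` lowers the sum of squares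
-- by at least `δ ^ 2 * #E`, which can happen at most `m` times.
lemma exists_sum_approx_of_sum_sq_le [DecidableEq γ] {E : Finset γ} {𝓡 : Set (Finset γ)}
    (hne : 𝓡.Nonempty) (h𝓡 : ∀ R ∈ 𝓡, R ⊆ E) {δ : ℝ} (hδ : 0 ≤ δ) {m : ℕ} {f : γ → ℝ}
    (hf : ∑ x ∈ E, f x ^ 2 ≤ m * δ ^ 2 * #E) :
    ∃ (R : Fin m → Finset γ) (s : Fin m → ℝ), (∀ i, R i ∈ 𝓡) ∧ (∀ i, |s i| ≤ δ) ∧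
      ∀ T ∈ 𝓡, |∑ x ∈ T, f x - ∑ i, s i * #(T ∩ R i)| ≤ δ * #E := by
  induction m generalizing f with
  | zero =>
    have hzero : ∀ x ∈ E, f x ^ 2 = 0 := (sum_eq_zero_iff_of_nonneg fun x _ ↦ sq_nonneg _).mp <|
      le_antisymm (by simpa using hf) (sum_nonneg fun x _ ↦ sq_nonneg _)
    refine ⟨Fin.elim0, Fin.elim0, Fin.rec0, Fin.rec0, fun T hT ↦ ?_⟩
    rw [sum_eq_zero fun x hx ↦ pow_eq_zero_iff two_ne_zero |>.mp (hzero x (h𝓡 T hT hx))]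
    simpa using by positivity
  | succ m ih =>
    by_cases hgood : ∀ T ∈ 𝓡, |∑ x ∈ T, f x| ≤ δ * #E
    · exact ⟨fun _ ↦ hne.some, 0, fun _ ↦ hne.some_mem, by simpa, by simpa⟩
    push Not at hgood
    obtain ⟨R₀, hR₀, hbad⟩ := hgood
    obtain ⟨t, ht, hincrement⟩ : ∃ t : ℝ, |t| = δ ∧ t * ∑ x ∈ R₀, f x = δ * |∑ x ∈ R₀, f x| := by
      rcases abs_choice (∑ x ∈ R₀, f x) with h | h
      · exact ⟨δ, abs_of_nonneg hδ, by rw [h]⟩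
      · exact ⟨-δ, by rw [abs_neg, abs_of_nonneg hδ], by rw [h]; ring⟩
    obtain ⟨R, s, hR, hs, happrox⟩ := ih (f := fun x ↦ f x - if x ∈ R₀ then t else 0) <| by
      have hcard : (#R₀ : ℝ) ≤ #E := by exact_mod_cast card_le_card (h𝓡 R₀ hR₀)
      rw [sum_sub_ite_sq (h𝓡 R₀ hR₀), mul_assoc 2 t, hincrement, ← sq_abs t, ht]
      push_cast at hf
      nlinarith [mul_le_mul_of_nonneg_left hbad.le hδ,
        mul_le_mul_of_nonneg_left hcard (sq_nonneg δ)]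
    refine ⟨Fin.cons R₀ R, Fin.cons t s, Fin.cases hR₀ hR, Fin.cases ht.le hs, fun T hT ↦ ?_⟩
    have hT := happrox T hT
    rw [sum_sub_distrib, sum_ite_mem, sum_const, nsmul_eq_mul] at hT
    simp only [Fin.sum_univ_succ, Fin.cons_zero, Fin.cons_succ]
    convert hT using 2
    ring

variable [DecidableEq α] [DecidableEq β] {f : α × β → ℝ} {A : Finset α} {B : Finset β}
  {m : ℕ} {δ : ℝ}

/-- A cut decomposition in the sense of Frieze and Kannan: on `A × B`, the function `f` is within
cut distance `δ` of the combination of the `m` rectangles `P i × Q i` with coefficients `s i`, all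
of modulus at most `δ`. -/
structure IsCutDecomposition (f : α × β → ℝ) (A : Finset α) (B : Finset β) (δ : ℝ)
    (s : Fin m → ℝ) (P : Fin m → Finset α) (Q : Fin m → Finset β) : Prop where
  abs_coeff_le (i : Fin m) : |s i| ≤ δ
  abs_sum_sub_le {X : Finset α} {Y : Finset β} (hX : X ⊆ A) (hY : Y ⊆ B) :
    |∑ p ∈ X ×ˢ Y, f p - ∑ i, s i * (#(X ∩ P i) * #(Y ∩ Q i))| ≤ δ * (#A * #B)

lemma exists_isCutDecomposition (hδ : 0 ≤ δ) (hm : 1 ≤ m * δ ^ 2)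
    (hf : ∀ p ∈ A ×ˢ B, |f p| ≤ 1) :
    ∃ (s : Fin m → ℝ) (P : Fin m → Finset α) (Q : Fin m → Finset β),
      IsCutDecomposition f A B δ s P Q := by
  let rectangles : Set (Finset (α × β)) := {R | ∃ X ⊆ A, ∃ Y ⊆ B, X ×ˢ Y = R}
  have henergy : ∑ p ∈ A ×ˢ B, f p ^ 2 ≤ m * δ ^ 2 * #(A ×ˢ B) := by
    calc
      ∑ p ∈ A ×ˢ B, f p ^ 2 ≤ ∑ _p ∈ A ×ˢ B, 1 :=
        sum_le_sum fun p hp ↦ (sq_le_one_iff_abs_le_one _).mpr (hf p hp)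
      _ = 1 * #(A ×ˢ B) := by simp
      _ ≤ m * δ ^ 2 * #(A ×ˢ B) := by gcongr
  obtain ⟨R, s, hR, hs, happrox⟩ := exists_sum_approx_of_sum_sq_le (𝓡 := rectangles)
    ⟨A ×ˢ B, A, Subset.rfl, B, Subset.rfl, rfl⟩
    (by rintro _ ⟨X, hX, Y, hY, rfl⟩; exact product_subset_product hX hY) hδ henergy
  choose P _ Q _ hPQ using hR
  refine ⟨s, P, Q, hs, fun {X Y} hX hY ↦ ?_⟩
  simpa only [← hPQ, product_inter_product, card_product, Nat.cast_mul] using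
    happrox (X ×ˢ Y) ⟨X, hX, Y, hY, rfl⟩

end CutDecomposition

section Lifting

variable {α β κ : Type*}

lemma exists_subset_abs_card_sub_le {Z : Finset α} {u e : ℝ} (hu : 0 ≤ u) (he : 0 ≤ e)
    (hue : u ≤ #Z + e) : ∃ Z' ⊆ Z, |(#Z' : ℝ) - u| ≤ e + 1 := by
  have hfloor := Nat.floor_le hu
  rcases le_total ⌊u⌋₊ #Z with h | h
  · obtain ⟨Z', hZ', hcard⟩ := exists_subset_card_eq h
    refine ⟨Z', hZ', ?_⟩
    rw [hcard, abs_le]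
    constructor <;> linarith [Nat.lt_floor_add_one u]
  · have h' : (#Z : ℝ) ≤ ⌊u⌋₊ := by exact_mod_cast h
    refine ⟨Z, Subset.rfl, ?_⟩
    rw [abs_le]
    constructor <;> linarith

lemma abs_mul_sub_mul_le {u v u' v' t : ℝ} (hv : |v| ≤ 1) (hu' : |u'| ≤ 1) (hu : |u - u'| ≤ t)
    (hvv' : |v - v'| ≤ t) : |u * v - u' * v'| ≤ 2 * t := by
  calc
    |u * v - u' * v'| = |(u - u') * v + u' * (v - v')| := by ring_nf
    _ ≤ |u - u'| * |v| + |u'| * |v - v'| := by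
        simpa only [abs_mul] using abs_add_le ((u - u') * v) (u' * (v - v'))
    _ ≤ t * 1 + 1 * t := by
        have ht : 0 ≤ t := (abs_nonneg _).trans hu
        gcongr
    _ = 2 * t := by ring

lemma abs_card_div_card_le_one {X S : Finset α} (hXS : X ⊆ S) : |(#X : ℝ) / #S| ≤ 1 := by
  rw [abs_of_nonneg (by positivity)]
  exact div_le_one_of_le₀ (by exact_mod_cast card_le_card hXS) (Nat.cast_nonneg _)

lemma card_filter_mem_eq_sum [DecidableEq κ] (X : Finset α) (φ : α → κ) (K : Finset κ) :
    #{x ∈ X | φ x ∈ K} = ∑ k ∈ K, #{x ∈ X | φ x = k} := by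
  rw [card_eq_sum_card_fiberwise (s := {x ∈ X | φ x ∈ K}) (f := φ) (t := K) (by intro; simp)]
  refine sum_congr rfl fun k hk ↦ ?_
  rw [filter_filter]
  congr 1
  ext x
  aesop

-- Copy `X` one colour class at a time, keeping the proportion it takes up; rounding costs `1 / #A`.
lemma IsSample.exists_lift_fiber [DecidableEq κ] {c η : ℝ} {A S X : Finset α} {φ : α → κ}
    (h : IsSample c η (fun k ↦ φ ⁻¹' {k}) A S) (hη : 0 ≤ η) (hX : X ⊆ S) (k : κ) :
    ∃ Z ⊆ {x ∈ A | φ x = k}, |(#Z : ℝ) / #A - #{x ∈ X | φ x = k} / #S| ≤ 2 * η := by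
  have hcardA := h.card_superset_pos
  have hdensity := h.abs_relDensity_sub_le k
  have hcoe (T : Finset α) : relDensity T (φ ⁻¹' {k}) = #{x ∈ T | φ x = k} / #T := by
    rw [← Set.ncard_coe_finset {x ∈ T | φ x = k}, coe_filter]
    rfl
  rw [hcoe, hcoe] at hdensity
  have hXS : (#{x ∈ X | φ x = k} : ℝ) / #S ≤ #{x ∈ S | φ x = k} / #S := by gcongr
  obtain ⟨Z, hZ, hcard⟩ := exists_subset_abs_card_sub_le (Z := {x ∈ A | φ x = k})
    (u := #{x ∈ X | φ x = k} / #S * #A) (e := η * #A) (by positivity) (by positivity) <| by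
      calc
        (#{x ∈ X | φ x = k} : ℝ) / #S * #A ≤ (#{x ∈ A | φ x = k} / #A + η) * #A := by
          gcongr
          linarith [(abs_le.mp hdensity).2]
        _ = #{x ∈ A | φ x = k} + η * #A := by
          rw [add_mul, div_mul_cancel₀ _ hcardA.ne']
  have hlarge : 1 ≤ η * #A := h.one_le_mul_card.trans (by gcongr; exact h.subset)
  refine ⟨Z, hZ, ?_⟩
  have hscale : (#Z : ℝ) / #A - #{x ∈ X | φ x = k} / #S
      = (#Z - #{x ∈ X | φ x = k} / #S * #A) / #A := by
    field_simp
  rw [hscale, abs_div, abs_of_pos hcardA, div_le_iff₀ hcardA]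
  linarith

lemma IsSample.exists_lift [Fintype κ] [DecidableEq κ] {c η : ℝ} {A S X : Finset α} {φ : α → κ}
    (h : IsSample c η (fun k ↦ φ ⁻¹' {k}) A S) (hη : 0 ≤ η) (hX : X ⊆ S) :
    ∃ X' ⊆ A, ∀ K : Finset κ, |(#{x ∈ X' | φ x ∈ K} : ℝ) / #A - #{x ∈ X | φ x ∈ K} / #S|
      ≤ Fintype.card κ * (2 * η) := by
  classical
  choose Z hZ hcard using h.exists_lift_fiber hη hX
  refine ⟨{x ∈ A | x ∈ Z (φ x)}, filter_subset _ _, fun K ↦ ?_⟩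
  have hfiber (k : κ) : {x ∈ {x ∈ A | x ∈ Z (φ x)} | φ x = k} = Z k := by
    ext x
    have := @hZ k x
    simp only [mem_filter] at this ⊢
    grind
  rw [card_filter_mem_eq_sum, card_filter_mem_eq_sum X]
  simp only [hfiber, Nat.cast_sum, sum_div, ← sum_sub_distrib]
  calc
    |∑ k ∈ K, ((#(Z k) : ℝ) / #A - #{x ∈ X | φ x = k} / #S)|
      ≤ ∑ k ∈ K, 2 * η := (abs_sum_le_sum_abs _ _).trans (sum_le_sum fun k _ ↦ hcard k)
    _ ≤ Fintype.card κ * (2 * η) := by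
      rw [sum_const, nsmul_eq_mul]
      gcongr
      exact card_le_univ K

/-- The set of indices `i` with `x ∈ P i`; its fibres are the atoms of the Boolean algebra generated
by the sets `P i`. -/
def profile [DecidableEq α] [Fintype κ] (P : κ → Finset α) (x : α) : Finset κ := {i | x ∈ P i}

lemma IsSample.exists_lift_profile [DecidableEq α] [Fintype κ] {c η : ℝ}
    {A S X : Finset α} {P : κ → Finset α} (h : IsSample c η (fun k ↦ profile P ⁻¹' {k}) A S)
    (hη : 0 ≤ η) (hX : X ⊆ S) :
    ∃ X' ⊆ A, |(#X' : ℝ) / #A - #X / #S| ≤ 2 ^ Fintype.card κ * (2 * η) ∧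
      ∀ i, |(#(X' ∩ P i) : ℝ) / #A - #(X ∩ P i) / #S| ≤ 2 ^ Fintype.card κ * (2 * η) := by
  classical
  obtain ⟨X', hX', hlift⟩ := h.exists_lift hη hX
  simp only [Fintype.card_finset, Nat.cast_pow, Nat.cast_ofNat] at hlift
  refine ⟨X', hX', by simpa using hlift univ, fun i ↦ ?_⟩
  simpa [profile, filter_mem_eq_inter] using hlift {k | i ∈ k}

/-- The transference property behind the inheritance of regularity: every rectangle `X × Y` inside
`S × T` has a counterpart in `A × B` whose relative sides and normalized `f`-mass agree with those
of `X × Y` up to `γ`. -/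
def RectsLift (γ : ℝ) (f : α × β → ℝ) (S : Finset α) (T : Finset β) (A : Finset α)
    (B : Finset β) : Prop :=
  ∀ X ⊆ S, ∀ Y ⊆ T, ∃ X' ⊆ A, ∃ Y' ⊆ B,
    |(#X' : ℝ) / #A - #X / #S| ≤ γ ∧ |(#Y' : ℝ) / #B - #Y / #T| ≤ γ ∧
    |(∑ p ∈ X' ×ˢ Y', f p) / (#A * #B) - (∑ p ∈ X ×ˢ Y, f p) / (#S * #T)| ≤ γ

variable [DecidableEq α] [DecidableEq β] {f : α × β → ℝ} {A S : Finset α} {B T : Finset β}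
  {m : ℕ} {δ η c : ℝ} {s : Fin m → ℝ} {P : Fin m → Finset α} {Q : Fin m → Finset β}

lemma IsCutDecomposition.abs_div_sub_le (h : IsCutDecomposition f A B δ s P Q) {X : Finset α}
    {Y : Finset β} (hX : X ⊆ A) (hY : Y ⊆ B) {a b : ℝ} (ha : 0 < a) (hb : 0 < b) :
    |(∑ p ∈ X ×ˢ Y, f p) / (a * b) - ∑ i, s i * (#(X ∩ P i) / a * (#(Y ∩ Q i) / b))|
      ≤ δ * (#A / a * (#B / b)) := by
  have hscale : (∑ p ∈ X ×ˢ Y, f p) / (a * b) - ∑ i, s i * (#(X ∩ P i) / a * (#(Y ∩ Q i) / b))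
      = (∑ p ∈ X ×ˢ Y, f p - ∑ i, s i * (#(X ∩ P i) * #(Y ∩ Q i))) / (a * b) := by
    simp only [sub_div, sum_div, div_mul_div_comm, mul_div_assoc]
  rw [hscale, abs_div, abs_of_pos (mul_pos ha hb), div_mul_div_comm, ← mul_div_assoc]
  gcongr
  exact h.abs_sum_sub_le hX hY

lemma abs_sum_coeff_mul_sub_le {u v u' v' : Fin m → ℝ} {t : ℝ} (hδ : 0 ≤ δ)
    (hs : ∀ i, |s i| ≤ δ) (hv : ∀ i, |v i| ≤ 1) (hu' : ∀ i, |u' i| ≤ 1)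
    (hu : ∀ i, |u i - u' i| ≤ t) (hvv' : ∀ i, |v i - v' i| ≤ t) :
    |∑ i, s i * (u i * v i) - ∑ i, s i * (u' i * v' i)| ≤ m * (δ * (2 * t)) := by
  rw [← sum_sub_distrib]
  calc
    |∑ i, (s i * (u i * v i) - s i * (u' i * v' i))|
      ≤ ∑ i, |s i * (u i * v i) - s i * (u' i * v' i)| := abs_sum_le_sum_abs _ _
    _ ≤ ∑ _i : Fin m, δ * (2 * t) := by
      gcongr with i
      rw [← mul_sub, abs_mul]
      gcongr
      · exact hs i
      · exact abs_mul_sub_mul_le (hv i) (hu' i) (hu i) (hvv' i)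
    _ = m * (δ * (2 * t)) := by simp

lemma IsCutDecomposition.rectsLift (h : IsCutDecomposition f A B δ s P Q) (hδ : 0 ≤ δ)
    (hc : 0 < c) (hη : 0 ≤ η) {γ : ℝ} (hγ : 2 ^ m * (2 * η) ≤ γ)
    (hγ' : δ + δ / c ^ 2 + m * (δ * (2 * (2 ^ m * (2 * η)))) ≤ γ)
    (hS : IsSample c η (fun k ↦ profile P ⁻¹' {k}) A S)
    (hT : IsSample c η (fun k ↦ profile Q ⁻¹' {k}) B T) : RectsLift γ f S T A B := by
  intro X hX Y hY
  obtain ⟨X', hX', hXX', hXP⟩ := hS.exists_lift_profile hη hX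
  obtain ⟨Y', hY', hYY', hYQ⟩ := hT.exists_lift_profile hη hY
  rw [Fintype.card_fin] at hXX' hXP hYY' hYQ
  refine ⟨X', hX', Y', hY', hXX'.trans hγ, hYY'.trans hγ, ?_⟩
  have hlarge := h.abs_div_sub_le hX' hY' hS.card_superset_pos hT.card_superset_pos
  rw [div_self hS.card_superset_pos.ne', div_self hT.card_superset_pos.ne', mul_one,
    mul_one] at hlarge
  have hsmall := (h.abs_div_sub_le (hX.trans hS.subset) (hY.trans hT.subset) hS.card_pos
    hT.card_pos).trans <| mul_le_mul_of_nonneg_left (mul_le_mul (hS.card_div_card_le hc)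
      (hT.card_div_card_le hc) (by positivity) (by positivity)) hδ
  rw [div_mul_div_comm, one_mul, ← sq, mul_one_div] at hsmall
  have hcoeff := abs_sum_coeff_mul_sub_le hδ h.abs_coeff_le
    (fun i ↦ abs_card_div_card_le_one (inter_subset_left.trans hY' : Y' ∩ Q i ⊆ B))
    (fun i ↦ abs_card_div_card_le_one (inter_subset_left.trans hX : X ∩ P i ⊆ S)) hXP hYQ
  rw [abs_le] at hlarge hsmall hcoeff ⊢
  constructor <;> linarith

lemma exists_rectsLift_of_isSample (hc : 0 < c) {γ : ℝ} (hγ : 0 < γ) :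
    ∃ (m : ℕ) (η : ℝ), 0 < η ∧ η ≤ γ ∧
      ∀ {α : Type u} {β : Type v} [DecidableEq α] [DecidableEq β] {f : α × β → ℝ} {A : Finset α}
        {B : Finset β}, (∀ p ∈ A ×ˢ B, |f p| ≤ 1) →
        ∃ (P : Fin m → Finset α) (Q : Fin m → Finset β), ∀ {S : Finset α} {T : Finset β},
          IsSample c η (fun k ↦ profile P ⁻¹' {k}) A S →
          IsSample c η (fun k ↦ profile Q ⁻¹' {k}) B T → RectsLift γ f S T A B := by
  obtain ⟨δ, hδ, hδγ⟩ : ∃ δ : ℝ, 0 < δ ∧ δ + δ / c ^ 2 = γ / 2 :=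
    ⟨γ / 2 / (1 + 1 / c ^ 2), by positivity, by field_simp⟩
  obtain ⟨m, hm⟩ := exists_nat_ge (1 / δ ^ 2)
  rw [div_le_iff₀ (by positivity)] at hm
  obtain ⟨η, hη, hηγ, hηδ⟩ : ∃ η : ℝ, 0 < η ∧ 2 ^ m * (2 * η) ≤ γ ∧
      m * (δ * (2 * (2 ^ m * (2 * η)))) ≤ γ / 2 := by
    have hden : 0 < 4 * m * δ + 1 := by positivity
    have hτ : 2 ^ m * (2 * (γ / (2 ^ m * (2 * (4 * m * δ + 1))))) = γ / (4 * m * δ + 1) := by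
      field_simp
    refine ⟨γ / (2 ^ m * (2 * (4 * m * δ + 1))), by positivity, ?_, ?_⟩ <;> rw [hτ]
    · exact div_le_self hγ.le (by linarith [show 0 ≤ 4 * m * δ by positivity])
    · rw [← mul_div_assoc, ← mul_div_assoc, ← mul_div_assoc, div_le_iff₀ hden]
      nlinarith
  refine ⟨m, η, hη, ?_, fun hf ↦ ?_⟩
  · nlinarith [one_le_pow₀ (one_le_two : (1 : ℝ) ≤ 2) (n := m)]
  obtain ⟨s, P, Q, hcut⟩ := exists_isCutDecomposition hδ.le hm hf
  exact ⟨P, Q, hcut.rectsLift hδ.le hc hη.le hηγ (by linarith)⟩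

end Lifting

section SuperRegular

lemma abs_div_sub_div_le {F F' p p' : ℝ} (hp : 0 < p) (hp' : 0 < p') (hF' : |F'| ≤ p') :
    |F / p - F' / p'| ≤ (|F - F'| + |p - p'|) / p := by
  have hsplit : F / p - F' / p' = (F - F' + F' / p' * (p' - p)) / p := by
    field_simp
    ring
  rw [hsplit, abs_div, abs_of_pos hp, abs_sub_comm p]
  gcongr
  refine (abs_add_le _ _).trans ?_
  rw [abs_mul, abs_div, abs_of_pos hp']
  gcongr
  exact mul_le_of_le_one_left (abs_nonneg _) (div_le_one_of_le₀ hF' hp'.le)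

lemma abs_div_mul_sub_div_mul_le {F F' x y x' y' a t : ℝ} (ha : 0 < a) (hx : a ≤ x) (hy : a ≤ y)
    (hx' : 0 < x') (hy' : 0 < y') (hy1 : |y| ≤ 1) (hx'1 : |x'| ≤ 1) (hF' : |F'| ≤ x' * y')
    (hxx' : |x - x'| ≤ t) (hyy' : |y - y'| ≤ t) (hFF' : |F - F'| ≤ t) :
    |F / (x * y) - F' / (x' * y')| ≤ 3 * t / a ^ 2 := by
  have hsq : a ^ 2 ≤ x * y := by
    rw [sq]
    exact mul_le_mul hx hy ha.le (ha.le.trans hx)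
  have hpos : 0 < x * y := (pow_pos ha 2).trans_le hsq
  calc
    |F / (x * y) - F' / (x' * y')| ≤ (|F - F'| + |x * y - x' * y'|) / (x * y) :=
      abs_div_sub_div_le hpos (mul_pos hx' hy') hF'
    _ ≤ (t + 2 * t) / (x * y) := by
      gcongr
      exact abs_mul_sub_mul_le hy1 hx'1 hxx' hyy'
    _ = 3 * t / (x * y) := by ring
    _ ≤ 3 * t / a ^ 2 := by
      have ht : 0 ≤ t := (abs_nonneg _).trans hxx'
      gcongr

variable {V : Type*} {G : SimpleGraph V} {A B S T : Finset V} {c d γ ε ε' η : ℝ}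

lemma eBetween_eq_sum (G : SimpleGraph V) (X Y : Finset V) : (eBetween G X Y : ℝ)
    = ∑ p ∈ X ×ˢ Y, {p : V × V | G.Adj p.1 p.2}.indicator (1 : V × V → ℝ) p := by
  rw [sum_indicator_one, eBetween]
  congr 2
  ext p
  simp [and_assoc]

lemma eBetween_le (G : SimpleGraph V) (X Y : Finset V) : (eBetween G X Y : ℝ) ≤ #X * #Y := by
  rw [eBetween_eq_sum, ← Nat.cast_mul, ← card_product]
  refine (sum_le_card_nsmul _ _ 1 fun p _ ↦ ?_).trans_eq (by simp)
  exact Set.indicator_le_self' (by simp) p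

lemma IsRegularPair.of_rectsLift (h : IsRegularPair G A B ε d) (hε : 0 < ε) (hA : A.Nonempty)
    (hB : B.Nonempty) (hS : S.Nonempty) (hT : T.Nonempty) (hγ : γ ≤ ε' - ε)
    (hγ' : 3 * γ ≤ (ε' - ε) * ε' ^ 2)
    (hlift : RectsLift γ ({p : V × V | G.Adj p.1 p.2}.indicator 1) S T A B) :
    IsRegularPair G S T ε' d := by
  intro X hX Y hY hXcard hYcard
  obtain ⟨X', hX', Y', hY', hXX', hYY', hedges⟩ := hlift X hX Y hY
  have hA0 : (0 : ℝ) < #A := by exact_mod_cast hA.card_pos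
  have hB0 : (0 : ℝ) < #B := by exact_mod_cast hB.card_pos
  have hS0 : (0 : ℝ) < #S := by exact_mod_cast hS.card_pos
  have hT0 : (0 : ℝ) < #T := by exact_mod_cast hT.card_pos
  rw [← le_div_iff₀ hS0] at hXcard
  rw [← le_div_iff₀ hT0] at hYcard
  have hε' : 0 < ε' := by linarith [(abs_nonneg _).trans hXX']
  have hX'card : ε ≤ #X' / #A := by linarith [(abs_le.mp hXX').1]
  have hY'card : ε ≤ #Y' / #B := by linarith [(abs_le.mp hYY').1]
  have hregular := h X' hX' Y' hY' ((le_div_iff₀ hA0).mp hX'card) ((le_div_iff₀ hB0).mp hY'card)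
  rw [← eBetween_eq_sum, ← eBetween_eq_sum, abs_sub_comm] at hedges
  have hcompare := abs_div_mul_sub_div_mul_le hε' hXcard hYcard (hε.trans_le hX'card)
    (hε.trans_le hY'card) (abs_card_div_card_le_one hY) (abs_card_div_card_le_one hX')
    (F' := eBetween G X' Y' / (#A * #B)) (by
      rw [abs_of_nonneg (by positivity), div_mul_div_comm]
      gcongr
      exact eBetween_le G X' Y')
    (by rwa [abs_sub_comm]) (by rwa [abs_sub_comm]) hedges
  rw [div_mul_div_comm, div_mul_div_comm, div_div_div_cancel_right₀ (by positivity),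
    div_div_div_cancel_right₀ (by positivity)] at hcompare
  have hslack : 3 * γ / ε' ^ 2 ≤ ε' - ε := (div_le_iff₀ (by positivity)).mpr hγ'
  calc
    |(eBetween G X Y : ℝ) / (#X * #Y) - d|
      ≤ |(eBetween G X Y : ℝ) / (#X * #Y) - eBetween G X' Y' / (#X' * #Y')|
        + |(eBetween G X' Y' : ℝ) / (#X' * #Y') - d| := abs_sub_le _ _ _
    _ < ε' := by linarith

lemma degIn_bounds_iff (hS : S.Nonempty) (v : V) :
    (d - ε) * #S ≤ degIn G v S ∧ degIn G v S ≤ (d + ε) * #S ↔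
      |relDensity S (G.neighborSet v) - d| ≤ ε := by
  have hcard : (0 : ℝ) < #S := by exact_mod_cast hS.card_pos
  rw [← le_div_iff₀ hcard, ← div_le_iff₀ hcard, abs_le]
  change d - ε ≤ relDensity S _ ∧ relDensity S _ ≤ d + ε ↔ _
  constructor <;> rintro ⟨_, _⟩ <;> constructor <;> linarith

lemma degIn_bounds_of_isSample {W : Finset V} (hS : IsSample c η (fun w : W ↦ G.neighborSet w) A S)
    (hη : η ≤ ε' - ε)
    (hdeg : ∀ w ∈ W, (d - ε) * #A ≤ degIn G w A ∧ degIn G w A ≤ (d + ε) * #A) :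
    ∀ w ∈ W, (d - ε') * #S ≤ degIn G w S ∧ degIn G w S ≤ (d + ε') * #S := by
  intro w hw
  have hdegA := (degIn_bounds_iff (hS.nonempty.mono hS.subset) w).mp (hdeg w hw)
  refine (degIn_bounds_iff hS.nonempty w).mpr ((abs_sub_le _ _ _).trans
    ((add_le_add (hS.abs_relDensity_sub_le ⟨w, hw⟩) hdegA).trans ?_))
  linarith

lemma IsSuperRegularPair.of_rectsLift (h : IsSuperRegularPair G A B ε d) (hε : 0 < ε)
    (hS : IsSample c η (fun b : B ↦ G.neighborSet b) A S)
    (hT : IsSample c η (fun a : A ↦ G.neighborSet a) B T) (hη : η ≤ ε' - ε)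
    (hγ : γ ≤ ε' - ε) (hγ' : 3 * γ ≤ (ε' - ε) * ε' ^ 2)
    (hlift : RectsLift γ ({p : V × V | G.Adj p.1 p.2}.indicator 1) S T A B) :
    IsSuperRegularPair G S T ε' d := by
  obtain ⟨hregular, hdegA, hdegB⟩ := h
  exact ⟨hregular.of_rectsLift hε (hS.nonempty.mono hS.subset) (hT.nonempty.mono hT.subset)
      hS.nonempty hT.nonempty hγ hγ' hlift,
    fun a ha ↦ degIn_bounds_of_isSample hT hη hdegA a (hS.subset ha),
    fun b hb ↦ degIn_bounds_of_isSample hS hη hdegB b (hT.subset hb)⟩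

theorem super_regular_pair_partition_general {c ε ε' : ℝ} (hc : 0 < c) (hε : 0 < ε)
    (hεε' : ε < ε') :
    ∃ n₀ : ℕ, ∀ n : ℕ, n₀ ≤ n →
      ∀ (V : Type u) [DecidableEq V] (G : SimpleGraph V) (A B : Finset V) (d : ℝ),
        #A ≤ n → #B ≤ n → IsSuperRegularPair G A B ε d →
        ∀ a₁ a₂ b₁ b₂ : ℕ,
          c * n ≤ (a₁ : ℝ) → c * n ≤ (a₂ : ℝ) → c * n ≤ (b₁ : ℝ) → c * n ≤ (b₂ : ℝ) →
          a₁ + a₂ = #A → b₁ + b₂ = #B →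
          ∃ A₁ A₂ B₁ B₂ : Finset V,
            Disjoint A₁ A₂ ∧ A₁ ∪ A₂ = A ∧
            Disjoint B₁ B₂ ∧ B₁ ∪ B₂ = B ∧
            #A₁ = a₁ ∧ #A₂ = a₂ ∧ #B₁ = b₁ ∧ #B₂ = b₂ ∧
            IsSuperRegularPair G A₁ B₁ ε' d ∧ IsSuperRegularPair G A₁ B₂ ε' d ∧
            IsSuperRegularPair G A₂ B₁ ε' d ∧ IsSuperRegularPair G A₂ B₂ ε' d := by
  have hslack : 0 < ε' - ε := sub_pos.mpr hεε'
  have hε' : 0 < ε' := hε.trans hεε'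
  obtain ⟨γ, hγ0, hγ, hγ'⟩ : ∃ γ : ℝ, 0 < γ ∧ γ ≤ ε' - ε ∧ γ ≤ (ε' - ε) * ε' ^ 2 / 3 :=
    ⟨min (ε' - ε) ((ε' - ε) * ε' ^ 2 / 3), lt_min hslack (by positivity), min_le_left _ _,
      min_le_right _ _⟩
  obtain ⟨m, η, hη, hηγ, hlift⟩ := exists_rectsLift_of_isSample.{u, u} hc hγ0
  obtain ⟨n₀, hn₀⟩ := eventually_atTop.mp (exists_isSample_partition.{u, u} hc hη (2 ^ m))
  refine ⟨n₀, fun n hn V _ G A B d hAn hBn hG a₁ a₂ b₁ b₂ ha₁ ha₂ hb₁ hb₂ ha hb ↦ ?_⟩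
  obtain ⟨P, Q, hPQ⟩ := hlift (f := {p : V × V | G.Adj p.1 p.2}.indicator 1) (A := A) (B := B)
    fun p _ ↦ by by_cases hp : G.Adj p.1 p.2 <;> simp [hp]
  obtain ⟨A₁, A₂, hAdisj, hAunion, hA₁, hA₂, hsA₁, hsA₂⟩ := hn₀ n hn
    (Sum.elim (fun k ↦ profile P ⁻¹' {k}) (fun b : B ↦ G.neighborSet b)) hAn
    (by simpa [add_comm] using hBn) ha₁ ha₂ ha
  obtain ⟨B₁, B₂, hBdisj, hBunion, hB₁, hB₂, hsB₁, hsB₂⟩ := hn₀ n hn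
    (Sum.elim (fun k ↦ profile Q ⁻¹' {k}) (fun a : A ↦ G.neighborSet a)) hBn
    (by simpa [add_comm] using hAn) hb₁ hb₂ hb
  have hpair {S T : Finset V}
      (hS : IsSample c η (Sum.elim (fun k ↦ profile P ⁻¹' {k}) fun b : B ↦ G.neighborSet b) A S)
      (hT : IsSample c η (Sum.elim (fun k ↦ profile Q ⁻¹' {k}) fun a : A ↦ G.neighborSet a) B T) :
      IsSuperRegularPair G S T ε' d :=
    hG.of_rectsLift hε (hS.comp .inr) (hT.comp .inr) (hηγ.trans hγ) hγ (by linarith)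
      (hPQ (hS.comp .inl) (hT.comp .inl))
  exact ⟨A₁, A₂, B₁, B₂, hAdisj, hAunion, hBdisj, hBunion, hA₁, hA₂, hB₁, hB₂, hpair hsA₁ hsB₁,
    hpair hsA₁ hsB₂, hpair hsA₂ hsB₁, hpair hsA₂ hsB₂⟩

end SuperRegular

end Development

/-- Proposition 2.5: a super-regular pair can be partitioned into prescribed
sizes so that all four sub-pairs are `(ε^{1/2}, d)`-super-regular. -/
theorem super_regular_pair_partition (ε d : ℝ) (hε0 : 0 < ε) (hεd : ε ≤ d) (hd1 : d ≤ 1) :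
    ∃ n₀ : ℕ, ∀ n : ℕ, n₀ ≤ n →
      ∀ (V : Type) [DecidableEq V] (G : SimpleGraph V) (A B : Finset V),
        IsBipartiteWith G A B →
        A.card ≤ n → B.card ≤ n →
        IsSuperRegularPair G A B ε d →
        ∀ a₁ a₂ b₁ b₂ : ℕ,
          ε * n ≤ (a₁ : ℝ) → ε * n ≤ (a₂ : ℝ) → ε * n ≤ (b₁ : ℝ) → ε * n ≤ (b₂ : ℝ) →
          a₁ + a₂ = A.card → b₁ + b₂ = B.card →
          ∃ A₁ A₂ B₁ B₂ : Finset V,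
            Disjoint A₁ A₂ ∧ A₁ ∪ A₂ = A ∧
            Disjoint B₁ B₂ ∧ B₁ ∪ B₂ = B ∧
            A₁.card = a₁ ∧ A₂.card = a₂ ∧ B₁.card = b₁ ∧ B₂.card = b₂ ∧
            IsSuperRegularPair G A₁ B₁ (Real.sqrt ε) d ∧
            IsSuperRegularPair G A₁ B₂ (Real.sqrt ε) d ∧
            IsSuperRegularPair G A₂ B₁ (Real.sqrt ε) d ∧
            IsSuperRegularPair G A₂ B₂ (Real.sqrt ε) d := by
  rcases (hεd.trans hd1).lt_or_eq with hε1 | rfl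
  · obtain ⟨n₀, h⟩ := super_regular_pair_partition_general hε0 hε0
      (Real.lt_sqrt_self_iff.mpr ⟨hε0.ne', hε1⟩)
    exact ⟨n₀, fun n hn V _ G A B _ hA hB hG ↦ h n hn V G A B d hA hB hG⟩
  · refine ⟨1, fun n hn V _ G A B _ hA _ _ a₁ a₂ b₁ b₂ ha₁ ha₂ _ _ ha ↦ ?_⟩
    rw [one_mul, Nat.cast_le] at ha₁ ha₂
    omega

end ApproxDecomp
end

section
/- Let 0 < 1/n ≪ η ≪ ξ ≪ 1 (that is, there exist ξ₀ > 0, for each ξ ≤ ξ₀ some η₀ > 0, and for each η ≤ η₀ some n₀, such that the following holds for all n ≥ n₀). Suppose G is an n-vertex graph with bi-independence number ᾶ(G) ≤ ηn. Then there exists a spanning subgraph H of G with ᾶ(H) ≤ 2η^{1/3}n and maximum degree Δ(H) ≤ ξn. -/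
open SimpleGraph

namespace ApproxDecomp

/-- The degree of a vertex, as the cardinality of its neighbour set. -/
noncomputable def deg {V : Type*} (G : SimpleGraph V) (v : V) : ℕ :=
  (G.neighborSet v).ncard

/-- An `(s,t)`-bipartite hole: two disjoint vertex sets of sizes `s`, `t`
with no edges between them. -/
def HasBipartiteHole {V : Type*} (G : SimpleGraph V) (s t : ℕ) : Prop :=
  ∃ S T : Finset V, Disjoint S T ∧ S.card = s ∧ T.card = t ∧
    ∀ a ∈ S, ∀ b ∈ T, ¬ G.Adj a b

/-- The bi-independence number: the largest `r` such that `G` has an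
`(s,t)`-bipartite hole for every `s + t = r`. -/
noncomputable def biIndep {V : Type*} (G : SimpleGraph V) : ℕ :=
  sSup {r : ℕ | ∀ s t : ℕ, s + t = r → HasBipartiteHole G s t}

/-!
Write `n` for the number of vertices and `β = η ^ (1 / 3)`. Keep each edge of `G` independently
with probability `p = 8 ^ (-1 / ξ)`.

Degrees: given `D > ξ n` potential edges at a vertex `v`, all of them are kept with probability at
most `p ^ D ≤ 8 ^ (-n)`, which beats the at most `n * 2 ^ n ≤ 4 ^ n` choices of `v` and the edges.

Holes: let `m = ᾶ(G) + 1 ≤ 2 β ^ 3 n`. As `G` has no `(m, m)`-hole, an `m`-set has fewer than `m`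
non-neighbours in any disjoint set `B`. Cutting a set `A` of size `k = ⌊β n⌋` into `m`-sets shows
that disjoint `k`-sets `A`, `B` have about `k ^ 2 / m` edges between them, and in any case at least
`n / (32 β) ≥ 3 n / p`, given that `96 β ≤ p`. All of these disappear with probability at most
`exp (-3 n) ≤ 16 ^ (-n)`, which beats the at most `4 ^ n` choices of `A` and `B`. A subgraph
without `(k, k)`-holes has bi-independence number at most `2 k ≤ 2 β n`.
-/

open Finset

variable {V : Type*}

namespace HasBipartiteHole

variable {G : SimpleGraph V} {s t s' t' : ℕ}

lemma mono (h : HasBipartiteHole G s t) (hs : s' ≤ s) (ht : t' ≤ t) :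
    HasBipartiteHole G s' t' := by
  obtain ⟨S, T, hST, rfl, rfl, hG⟩ := h
  obtain ⟨S', hS', rfl⟩ := exists_subset_card_eq hs
  obtain ⟨T', hT', rfl⟩ := exists_subset_card_eq ht
  exact ⟨S', T', hST.mono hS' hT', rfl, rfl, fun a ha b hb => hG a (hS' ha) b (hT' hb)⟩

lemma add_le_card [Fintype V] (h : HasBipartiteHole G s t) : s + t ≤ Fintype.card V := by
  classical
  obtain ⟨S, T, hST, rfl, rfl, -⟩ := h
  rw [← card_union_of_disjoint hST]
  exact card_le_univ _

end HasBipartiteHole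

section BiIndep

variable {G : SimpleGraph V}

lemma biIndep_le_of_not_hasBipartiteHole {s t : ℕ} (h : ¬ HasBipartiteHole G s t) :
    biIndep G ≤ s + t := by
  refine csSup_le' fun r hr => ?_
  by_contra! hlt
  exact h ((hr s (r - s) (by omega)).mono le_rfl (by omega))

lemma biIndep_le_card [Fintype V] : biIndep G ≤ Fintype.card V :=
  csSup_le' fun r hr => (hr r 0 rfl).add_le_card

variable [Finite V]

lemma le_biIndep {r : ℕ} (h : ∀ s t, s + t = r → HasBipartiteHole G s t) : r ≤ biIndep G := by
  have := Fintype.ofFinite V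
  exact le_csSup ⟨Fintype.card V, fun r hr => (hr r 0 rfl).add_le_card⟩ h

lemma HasBipartiteHole.le_biIndep {m : ℕ} (h : HasBipartiteHole G m m) : m ≤ biIndep G :=
  ApproxDecomp.le_biIndep fun _ _ hst => h.mono (by omega) (by omega)

lemma one_le_biIndep [Nonempty V] : 1 ≤ biIndep G := by
  let v : V := Classical.arbitrary V
  refine le_biIndep fun s t hst => ?_
  obtain ⟨rfl, rfl⟩ | ⟨rfl, rfl⟩ := Nat.add_eq_one_iff.mp hst
  · exact ⟨∅, {v}, by simp⟩
  · exact ⟨{v}, ∅, by simp⟩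

lemma pos_of_biIndep_le_mul_card [Fintype V] [Nonempty V] {c : ℝ}
    (h : biIndep G ≤ c * Fintype.card V) : 0 < c := by
  have hone : (1 : ℝ) ≤ biIndep G := by exact_mod_cast one_le_biIndep
  exact pos_of_mul_pos_left (one_pos.trans_le (hone.trans h)) (Nat.cast_nonneg _)

end BiIndep

section Interedges

variable {G : SimpleGraph V} [DecidableRel G.Adj] {A B : Finset V} {m : ℕ}

lemma hasBipartiteHole_of_card_interedges_add_le (hAB : Disjoint A B)
    (h : #(G.interedges A B) + m ≤ #B) : HasBipartiteHole G #A m := by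
  classical
  have hcard : m ≤ #(B \ (G.interedges A B).image Prod.snd) := by
    have := card_image_le (s := G.interedges A B) (f := Prod.snd)
    have := le_card_sdiff ((G.interedges A B).image Prod.snd) B
    omega
  refine HasBipartiteHole.mono ⟨A, _, hAB.mono_right sdiff_subset, rfl, rfl, ?_⟩ le_rfl hcard
  intro a ha b hb hadj
  rw [mem_sdiff] at hb
  exact hb.2 (mem_image.mpr ⟨(a, b), G.mk_mem_interedges_iff.mpr ⟨ha, hb.1, hadj⟩, rfl⟩)

lemma card_sub_mul_card_sub_le_mul_card_interedges (hm : ¬ HasBipartiteHole G m m)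
    (hAB : Disjoint A B) :
    (#A - m) * (#B - m) ≤ m * #(G.interedges A B) := by
  classical
  have hm₀ : 0 < m := by
    by_contra! h
    obtain rfl : m = 0 := by omega
    exact hm ⟨∅, ∅, by simp⟩
  induction A using Finset.strongInduction with
  | H A ih =>
    obtain hA | hA := le_or_gt #A m
    · simp [Nat.sub_eq_zero_of_le hA]
    obtain ⟨S, hSA, hS⟩ := exists_subset_card_eq hA.le
    have hcardS : #B - m ≤ #(G.interedges S B) := by
      by_contra! h
      refine hm ?_
      simpa only [hS] using hasBipartiteHole_of_card_interedges_add_le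
        (hAB.mono_left hSA) (by omega : #(G.interedges S B) + m ≤ #B)
    have hrest := ih (A \ S) (sdiff_ssubset hSA (card_pos.mp (hS ▸ hm₀)))
      (hAB.mono_left sdiff_subset)
    have hsplit : #(G.interedges S B) + #(G.interedges (A \ S) B) ≤ #(G.interedges A B) := by
      rw [← card_union_of_disjoint (G.interedges_disjoint_left disjoint_sdiff B)]
      exact card_le_card (union_subset (G.interedges_mono hSA subset_rfl)
        (G.interedges_mono sdiff_subset subset_rfl))
    calc (#A - m) * (#B - m)
        ≤ (m + (#(A \ S) - m)) * (#B - m) := by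
          gcongr
          rw [card_sdiff_of_subset hSA]
          omega
      _ = m * (#B - m) + (#(A \ S) - m) * (#B - m) := add_mul ..
      _ ≤ m * #(G.interedges S B) + m * #(G.interedges (A \ S) B) := by gcongr
      _ ≤ m * #(G.interedges A B) := by rw [← mul_add]; gcongr

lemma card_le_mul_card_interedges [Fintype V] [Nonempty V] {β : ℝ} (hβ₀ : 0 < β)
    (hβ : β ≤ 1 / 8) (hG : biIndep G ≤ β ^ 3 * Fintype.card V)
    (hAB : Disjoint A B) (hA : ⌊β * Fintype.card V⌋₊ ≤ #A)
    (hB : ⌊β * Fintype.card V⌋₊ ≤ #B) :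
    (Fintype.card V : ℝ) ≤ 32 * β * #(G.interedges A B) := by
  set n := Fintype.card V
  set m := biIndep G + 1 with hm
  have hn : (0 : ℝ) < n := by exact_mod_cast Fintype.card_pos
  have hone : (1 : ℝ) ≤ biIndep G := by exact_mod_cast one_le_biIndep
  have hm_le : (m : ℝ) ≤ 2 * (β ^ 3 * n) := by
    rw [hm]
    push_cast
    linarith
  have hcube : β ^ 3 * n ≤ β * n / 64 := by
    have : β ^ 2 ≤ 1 / 64 := by nlinarith
    nlinarith [mul_pos hβ₀ hn]
  have hsub {a : ℕ} (ha : ⌊β * n⌋₊ ≤ a) : β * n / 4 ≤ (a - m : ℕ) := by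
    have hfloor : β * n < a + 1 := (Nat.lt_floor_add_one _).trans_le (by gcongr)
    have hsub_le : (a : ℝ) ≤ (a - m : ℕ) + m := by exact_mod_cast le_tsub_add
    linarith
  have hedges : ((#A - m : ℕ) : ℝ) * (#B - m : ℕ) ≤ m * #(G.interedges A B) := by
    exact_mod_cast card_sub_mul_card_sub_le_mul_card_interedges
      (fun h => (Nat.lt_succ_self _).not_ge h.le_biIndep) hAB
  have hmain : β ^ 2 * n / 16 * n ≤ β ^ 2 * n / 16 * (32 * β * #(G.interedges A B)) :=
    calc β ^ 2 * n / 16 * n = β * n / 4 * (β * n / 4) := by ring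
      _ ≤ (#A - m : ℕ) * (#B - m : ℕ) := by gcongr <;> exact hsub ‹_›
      _ ≤ m * #(G.interedges A B) := hedges
      _ ≤ 2 * (β ^ 3 * n) * #(G.interedges A B) := by gcongr
      _ = β ^ 2 * n / 16 * (32 * β * #(G.interedges A B)) := by ring
  exact le_of_mul_le_mul_left hmain (by positivity)

end Interedges

section RandomSubset

variable {E 𝕜 : Type*}

/-- For `p ∈ [0, 1]`, the probability that a random subset of `E`, containing each element
independently with probability `p`, is equal to `R`. The value `p` is taken in an arbitrary
commutative ring, as the sums of these weights are polynomial identities in `p`. -/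
def bernoulliWeight [Fintype E] [DecidableEq E] [CommRing 𝕜] (p : 𝕜) (R : Finset E) : 𝕜 :=
  p ^ #R * (1 - p) ^ #Rᶜ

section CommRing

variable [Fintype E] [DecidableEq E] [CommRing 𝕜] (p : 𝕜)

lemma bernoulliWeight_compl (R : Finset E) : bernoulliWeight p Rᶜ = bernoulliWeight (1 - p) R := by
  simp [bernoulliWeight, mul_comm]

lemma sum_bernoulliWeight_of_subset (F : Finset E) :
    ∑ R with F ⊆ R, bernoulliWeight p R = p ^ #F := by
  have hterm (R : Finset E) : (if F ⊆ R then bernoulliWeight p R else 0) =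
      (∏ _e ∈ R, p) * ∏ e ∈ Rᶜ, if e ∈ F then (0 : 𝕜) else 1 - p := by
    split_ifs with hFR
    · rw [prod_congr rfl fun e he => if_neg fun heF => mem_compl.mp he (hFR heF)]
      simp [bernoulliWeight]
    · obtain ⟨e, heF, heR⟩ := not_subset.mp hFR
      rw [prod_eq_zero (mem_compl.mpr heR) (by simp [heF]), mul_zero]
  rw [sum_filter, sum_congr rfl fun R _ => hterm R, ← Fintype.prod_add]
  simp [apply_ite]

lemma sum_bernoulliWeight : ∑ R : Finset E, bernoulliWeight p R = 1 := by
  simpa using sum_bernoulliWeight_of_subset p (∅ : Finset E)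

lemma sum_bernoulliWeight_of_disjoint (F : Finset E) :
    ∑ R with Disjoint F R, bernoulliWeight p R = (1 - p) ^ #F := by
  rw [← sum_bernoulliWeight_of_subset, sum_filter, sum_filter]
  refine Fintype.sum_bijective _ compl_bijective _ _ fun R => ?_
  simp [← bernoulliWeight_compl, subset_compl_iff_disjoint_right]

end CommRing

-- First-moment method: `h` bounds the expected number of `f i` contained in, plus that of `g j`
-- disjoint from, a `p`-random set `R`.
lemma exists_forall_not_subset_and_forall_not_disjoint [Finite E] [CommRing 𝕜]
    [LinearOrder 𝕜] [IsStrictOrderedRing 𝕜] {p : 𝕜} (hp₀ : 0 ≤ p) (hp₁ : p ≤ 1)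
    {ι κ : Type*} {s : Finset ι} {t : Finset κ} {f : ι → Finset E} {g : κ → Finset E}
    (h : ∑ i ∈ s, p ^ #(f i) + ∑ j ∈ t, (1 - p) ^ #(g j) < 1) :
    ∃ R : Finset E, (∀ i ∈ s, ¬ f i ⊆ R) ∧ ∀ j ∈ t, ¬ Disjoint (g j) R := by
  classical
  have := Fintype.ofFinite E
  let bad (R : Finset E) := #{i ∈ s | f i ⊆ R} + #{j ∈ t | Disjoint (g j) R}
  have hexpect : ∑ R : Finset E, bernoulliWeight p R * bad R <
      ∑ R : Finset E, bernoulliWeight p R := by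
    convert h using 1
    · simp_rw [← sum_bernoulliWeight_of_disjoint, ← sum_bernoulliWeight_of_subset, sum_filter]
      rw [sum_comm, sum_comm (s := t), ← sum_add_distrib]
      refine sum_congr rfl fun R _ => ?_
      rw [← sum_filter, ← sum_filter, sum_const, sum_const, ← add_nsmul, nsmul_eq_mul, mul_comm]
    · exact sum_bernoulliWeight p
  obtain ⟨R, -, hR⟩ := exists_lt_of_sum_lt hexpect
  have hweight : 0 ≤ bernoulliWeight p R :=
    mul_nonneg (pow_nonneg hp₀ _) (pow_nonneg (sub_nonneg.mpr hp₁) _)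
  have hbad : bad R = 0 := by
    by_contra hne
    exact hR.not_ge (le_mul_of_one_le_right hweight
      (Nat.one_le_cast.mpr (Nat.one_le_iff_ne_zero.mpr hne)))
  exact ⟨R, by simpa [bad, filter_eq_empty_iff] using hbad⟩

end RandomSubset

section RandomSubgraph

/-- The edges of `G` with one end in `A` and the other in `B`, as unordered pairs. Mathlib's
`SimpleGraph.interedges` consists of ordered pairs, whose orientations would be sampled
independently. -/
def crossEdges [DecidableEq V] (G : SimpleGraph V) [DecidableRel G.Adj] (A B : Finset V) :
    Finset (Sym2 V) :=
  (G.interedges A B).image fun x => s(x.1, x.2)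

lemma card_crossEdges [DecidableEq V] (G : SimpleGraph V) [DecidableRel G.Adj] {A B : Finset V}
    (hAB : Disjoint A B) : #(crossEdges G A B) = #(G.interedges A B) := by
  refine card_image_of_injOn fun x hx y hy hxy => ?_
  rw [mem_coe, mem_interedges_iff] at hx hy
  obtain h | rfl := Sym2.mk_eq_mk_iff.mp hxy
  · exact h
  · exact absurd hy.2.1 (disjoint_left.mp hAB hx.1)

lemma not_hasBipartiteHole_inf_fromEdgeSet [DecidableEq V] {G : SimpleGraph V}
    [DecidableRel G.Adj] {R : Set (Sym2 V)} {k : ℕ}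
    (h : ∀ A B : Finset V, Disjoint A B → #A = k → #B = k → ¬ Disjoint ↑(crossEdges G A B) R) :
    ¬ HasBipartiteHole (G ⊓ fromEdgeSet R) k k := by
  rintro ⟨A, B, hAB, hA, hB, hhole⟩
  refine h A B hAB hA hB (Set.disjoint_left.mpr fun e he heR => ?_)
  obtain ⟨⟨a, b⟩, hab, rfl⟩ := mem_image.mp (mem_coe.mp he)
  obtain ⟨ha, hb, hadj⟩ := G.mk_mem_interedges_iff.mp hab
  exact hhole a ha b hb ⟨hadj, (fromEdgeSet_adj R).mpr ⟨heR, hadj.ne⟩⟩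

lemma deg_inf_fromEdgeSet_lt [Finite V] (G : SimpleGraph V) {R : Set (Sym2 V)} {v : V} {D : ℕ}
    (h : ∀ T : Finset V, #T = D → ¬ ↑(T.map (Sym2.mkEmbedding v)) ⊆ R) :
    deg (G ⊓ fromEdgeSet R) v < D := by
  by_contra! hdeg
  obtain ⟨T, hT, hTcard⟩ := Set.exists_subset_card_eq hdeg
  lift T to Finset V using T.toFinite
  refine h T (by simpa using hTcard) fun e he => ?_
  obtain ⟨u, hu, rfl⟩ := Finset.mem_map.mp (mem_coe.mp he)
  exact ((fromEdgeSet_adj R).mp (hT hu).2).1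

variable [Fintype V]

lemma exists_le_not_hasBipartiteHole_deg_lt (G : SimpleGraph V) [DecidableRel G.Adj] {p : ℝ}
    (hp₀ : 0 ≤ p) (hp₁ : p ≤ 1) {k D N : ℕ}
    (hN : ∀ A B : Finset V, Disjoint A B → #A = k → #B = k → N ≤ #(G.interedges A B))
    (hp : Fintype.card V * (Fintype.card V).choose D * p ^ D +
      (Fintype.card V).choose k ^ 2 * (1 - p) ^ N < 1) :
    ∃ H ≤ G, ¬ HasBipartiteHole H k k ∧ ∀ v, deg H v < D := by
  classical
  let stars : Finset (V × Finset V) := univ ×ˢ powersetCard D univ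
  let pairs : Finset (Finset V × Finset V) :=
    {x ∈ powersetCard k univ ×ˢ powersetCard k univ | Disjoint x.1 x.2}
  have hstars : ∑ x ∈ stars, p ^ #(x.2.map (Sym2.mkEmbedding x.1)) =
      Fintype.card V * (Fintype.card V).choose D * p ^ D := by
    rw [sum_congr rfl (g := fun _ => p ^ D)]
    · simp [stars]
    · simp +contextual [stars]
  have hpairs : ∑ x ∈ pairs, (1 - p) ^ #(crossEdges G x.1 x.2) ≤
      (Fintype.card V).choose k ^ 2 * (1 - p) ^ N := by
    have hcard : #pairs ≤ (Fintype.card V).choose k ^ 2 :=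
      (card_filter_le _ _).trans (by simp [sq])
    have hterm : ∀ x ∈ pairs, (1 - p) ^ #(crossEdges G x.1 x.2) ≤ (1 - p) ^ N := by
      intro x hx
      simp only [pairs, mem_filter, mem_product, mem_powersetCard_univ] at hx
      rw [card_crossEdges G hx.2]
      exact pow_le_pow_of_le_one (by linarith) (by linarith) (hN _ _ hx.2 hx.1.1 hx.1.2)
    refine (sum_le_card_nsmul _ _ _ hterm).trans ?_
    rw [nsmul_eq_mul]
    have : 0 ≤ 1 - p := by linarith
    gcongr
    exact_mod_cast hcard
  obtain ⟨R, hRstar, hRpair⟩ := exists_forall_not_subset_and_forall_not_disjoint hp₀ hp₁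
    ((add_le_add hstars.le hpairs).trans_lt hp)
  refine ⟨G ⊓ fromEdgeSet R, inf_le_left, not_hasBipartiteHole_inf_fromEdgeSet ?_,
    fun v => deg_inf_fromEdgeSet_lt G ?_⟩
  · intro A B hAB hA hB
    exact_mod_cast hRpair (A, B) (by simp [pairs, hAB, hA, hB])
  · intro T hT
    exact_mod_cast hRstar (v, T) (by simp [stars, hT])

end RandomSubgraph

lemma mul_choose_mul_pow_add_choose_sq_mul_pow_lt_one {n k D N : ℕ} {p : ℝ} (hn : n ≠ 0)
    (hp₀ : 0 ≤ p) (hp₁ : p ≤ 1) (hD : p ^ D ≤ (1 / 8) ^ n) (hN : 3 * n ≤ p * N) :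
    n * n.choose D * p ^ D + n.choose k ^ 2 * (1 - p) ^ N < 1 := by
  have hchoose (j : ℕ) : (n.choose j : ℝ) ≤ 2 ^ n := by exact_mod_cast Nat.choose_le_two_pow n j
  have hstars : n * n.choose D * p ^ D ≤ 1 / 2 :=
    calc n * n.choose D * p ^ D ≤ 2 ^ n * 2 ^ n * (1 / 8) ^ n := by
          gcongr
          · exact_mod_cast Nat.lt_two_pow_self.le
          · exact hchoose D
      _ = (1 / 2) ^ n := by rw [← mul_pow, ← mul_pow]; norm_num
      _ ≤ 1 / 2 := pow_le_of_le_one (by norm_num) (by norm_num) hn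
  have hexp : Real.exp (-3) ≤ 1 / 16 := by
    have hexp_three : (16 : ℝ) ≤ Real.exp 3 :=
      calc (16 : ℝ) ≤ 2.7 ^ 3 := by norm_num
        _ ≤ Real.exp 1 ^ 3 := by gcongr; linarith [Real.exp_one_gt_d9]
        _ = Real.exp 3 := by rw [← Real.exp_nat_mul]; norm_num
    rw [Real.exp_neg, ← one_div]
    gcongr
  have hpow : (1 - p) ^ N ≤ (1 / 16) ^ n :=
    calc (1 - p) ^ N ≤ Real.exp (-p) ^ N :=
          pow_le_pow_left₀ (by linarith) (Real.one_sub_le_exp_neg p) N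
      _ = Real.exp (-(p * N)) := by rw [← Real.exp_nat_mul]; ring_nf
      _ ≤ Real.exp (-(3 * n)) := by gcongr
      _ = Real.exp (-3) ^ n := by rw [← Real.exp_nat_mul]; ring_nf
      _ ≤ (1 / 16) ^ n := by gcongr
  have hpairs : n.choose k ^ 2 * (1 - p) ^ N ≤ 1 / 4 :=
    calc n.choose k ^ 2 * (1 - p) ^ N ≤ (2 ^ n) ^ 2 * (1 / 16) ^ n := by
          gcongr
          exact hchoose k
      _ = (1 / 4) ^ n := by rw [← pow_mul, mul_comm n, pow_mul, ← mul_pow]; norm_num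
      _ ≤ 1 / 4 := pow_le_of_le_one (by norm_num) (by norm_num) hn
  linarith

lemma rpow_one_div_pow_floor_add_one_le {x ξ : ℝ} (hx₀ : 0 < x) (hx₁ : x ≤ 1) (hξ : 0 < ξ)
    (n : ℕ) : (x ^ (1 / ξ)) ^ (⌊ξ * n⌋₊ + 1) ≤ x ^ n := by
  rw [← Real.rpow_mul_natCast hx₀.le, ← Real.rpow_natCast]
  refine Real.rpow_le_rpow_of_exponent_ge hx₀ hx₁ ?_
  rw [one_div_mul_eq_div, le_div_iff₀' hξ]
  exact_mod_cast (Nat.lt_floor_add_one (ξ * n)).le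

lemma exists_le_biIndep_le_and_deg_le [Fintype V] [Nonempty V] {ξ β : ℝ} (hξ : 0 < ξ)
    (hβ₀ : 0 < β) (hβ : 96 * β ≤ (1 / 8) ^ (1 / ξ)) (G : SimpleGraph V)
    (hG : biIndep G ≤ β ^ 3 * Fintype.card V) :
    ∃ H ≤ G, biIndep H ≤ 2 * β * Fintype.card V ∧ ∀ v, deg H v ≤ ξ * Fintype.card V := by
  classical
  set n := Fintype.card V
  set p : ℝ := (1 / 8) ^ (1 / ξ)
  have hp₀ : 0 < p := by positivity
  have hp₁ : p ≤ 1 := Real.rpow_le_one (by norm_num) (by norm_num) (by positivity)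
  obtain ⟨H, hHG, hhole, hdeg⟩ : ∃ H ≤ G, ¬ HasBipartiteHole H ⌊β * n⌋₊ ⌊β * n⌋₊ ∧
      ∀ v, deg H v < ⌊ξ * n⌋₊ + 1 := by
    refine exists_le_not_hasBipartiteHole_deg_lt G hp₀.le hp₁ (N := ⌈3 * n / p⌉₊) ?_ ?_
    · intro A B hAB hA hB
      rw [Nat.ceil_le, div_le_iff₀' hp₀]
      calc (3 * n : ℝ) ≤ 3 * (32 * β * #(G.interedges A B)) := by
            gcongr
            exact card_le_mul_card_interedges hβ₀ (by linarith) hG hAB hA.ge hB.ge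
        _ = 96 * β * #(G.interedges A B) := by ring
        _ ≤ p * #(G.interedges A B) := by gcongr
    · refine mul_choose_mul_pow_add_choose_sq_mul_pow_lt_one Fintype.card_ne_zero hp₀.le hp₁
        (rpow_one_div_pow_floor_add_one_le (by norm_num) (by norm_num) hξ n) ?_
      exact (div_le_iff₀' hp₀).mp (Nat.le_ceil _)
  refine ⟨H, hHG, ?_, fun v => ?_⟩
  · calc (biIndep H : ℝ) ≤ ⌊β * n⌋₊ + ⌊β * n⌋₊ := by
          exact_mod_cast biIndep_le_of_not_hasBipartiteHole hhole
      _ ≤ β * n + β * n := by gcongr <;> exact Nat.floor_le (by positivity)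
      _ = 2 * β * n := by ring
  · exact (Nat.le_floor_iff (by positivity)).mp (Nat.lt_succ_iff.mp (hdeg v))

theorem sparse_subgraph_small_biindependence_general [Fintype V] {ξ η : ℝ} (hξ : 0 < ξ)
    (hη : η ≤ ((1 / 8) ^ (1 / ξ) / 96) ^ 3) (G : SimpleGraph V)
    (hG : biIndep G ≤ η * Fintype.card V) :
    ∃ H ≤ G, biIndep H ≤ 2 * η ^ ((1 : ℝ) / 3) * Fintype.card V ∧
      ∀ v, deg H v ≤ ξ * Fintype.card V := by
  obtain _ | _ := isEmpty_or_nonempty V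
  · have hzero : biIndep G = 0 := by simpa using biIndep_le_card (G := G)
    exact ⟨G, le_rfl, by simp [hzero], isEmptyElim⟩
  have hη₀ : 0 < η := pos_of_biIndep_le_mul_card hG
  have hcube : (η ^ ((1 : ℝ) / 3)) ^ 3 = η := by
    rw [← Real.rpow_mul_natCast hη₀.le]
    norm_num
  refine exists_le_biIndep_le_and_deg_le hξ (by positivity) ?_ G (by rwa [hcube])
  rw [← hcube] at hη
  linarith [le_of_pow_le_pow_left₀ three_ne_zero (by positivity) hη]

/-- Lemma 2.8: a graph with small bi-independence number has a sparse spanning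
subgraph which still has small bi-independence number. -/
theorem sparse_subgraph_small_biindependence :
    ∃ ξ₀ : ℝ, 0 < ξ₀ ∧
      ∀ ξ : ℝ, 0 < ξ → ξ ≤ ξ₀ →
      ∃ η₀ : ℝ, 0 < η₀ ∧
        ∀ η : ℝ, 0 < η → η ≤ η₀ →
        ∃ n₀ : ℕ, ∀ n : ℕ, n₀ ≤ n →
        ∀ G : SimpleGraph (Fin n),
          (biIndep G : ℝ) ≤ η * n →
          ∃ H : SimpleGraph (Fin n), H ≤ G ∧
            (biIndep H : ℝ) ≤ 2 * η ^ ((1 : ℝ)/3) * n ∧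
            ∀ v : Fin n, (deg H v : ℝ) ≤ ξ * n := by
  refine ⟨1, one_pos, fun ξ hξ _ => ⟨((1 / 8) ^ (1 / ξ) / 96) ^ 3, by positivity, fun η _ hη =>
    ⟨0, fun n _ G hG => ?_⟩⟩⟩
  simpa using sparse_subgraph_small_biindependence_general hξ hη G (by simpa using hG)

end ApproxDecomp
end
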